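/- Let m = (m_0, …, m_{l−1}) ∈ ℚ^l, let λ = (λ^0, …, λ^{l−1}) be an l-partition of n, and let N be a positive integer such that N + ⌊m_j⌋ ≥ ℓ(λ^j) for every j (where ⌊·⌋ denotes the integer part). For each j, let B^j be the sequence of rational numbers B^j_i := λ^j_i − i + N + m_j for i = 1, …, N + ⌊m_j⌋; let κ_m(λ) = (κ_1 ≥ κ_2 ≥ ⋯ ≥ κ_h) be all the entries of B^0, …, B^{l−1} arranged in weakly decreasing order, where h = lN + Σ_{j=0}^{l−1} ⌊m_j⌋, and set n_m(λ) := Σ_{i=1}^{h} (i−1)κ_i. Then n_m(λ) − n_m(∅) = n(λ̄) − Σ_{s=0}^{l−1} Σ_{(i,j)∈[λ^s]} Σ_{0≤t≤l−1, t≠s} min(h_{i,j}^{λ^s,λ^t} + m_s − m_t, 0), where n_m(∅) is computed for the empty l-partition with the same size N. -/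

import Mathlib

/-- A partition, encoded as a weakly decreasing, eventually-zero sequence of
natural numbers; `parts i` is the `(i+1)`-st part `λ_{i+1}` (0-indexed rows). -/
structure Ptn where
  parts : ℕ → ℕ
  antitone' : Antitone parts
  eventually_zero : ∃ N, ∀ i, N ≤ i → parts i = 0

namespace Ptn

/-- `conj p k` is the conjugate-partition part `λ'_{k+1} = #{i ≥ 1 : λ_i ≥ k+1}`. -/
noncomputable def conj (p : Ptn) (k : ℕ) : ℕ := Nat.card {i : ℕ // k < p.parts i}

/-- `|λ| = Σ_{i ≥ 1} λ_i`. -/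
noncomputable def size (p : Ptn) : ℕ := ∑ᶠ i, p.parts i

/-- `n(λ) = Σ_{i ≥ 1} (i-1) λ_i`. -/
noncomputable def nn (p : Ptn) : ℕ := ∑ᶠ i, i * p.parts i

/-- The empty partition. -/
def empty : Ptn := ⟨fun _ => 0, fun _ _ _ => le_rfl, ⟨0, fun _ _ => rfl⟩⟩

end Ptn

/-- The generalised hook length `h_{i,j}^{λ,μ} = λ_i - i + μ'_j - j + 1`, for the node
in (0-indexed) row `i` and column `j`, i.e. the 1-indexed node `(i+1, j+1)`. -/
noncomputable def ghook (lam mu : Ptn) (i j : ℕ) : ℤ :=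
  (lam.parts i : ℤ) - (i + 1) + (mu.conj j : ℤ) - (j + 1) + 1

/-- Given a finite multiset `κ` of rationals, arrange its elements in weakly decreasing
order `κ_1 ≥ κ_2 ≥ ⋯ ≥ κ_h` and form `Σ_{i=1}^{h} (i-1) κ_i`. -/
noncomputable def nmOf (M : Multiset ℚ) : ℚ :=
  ∑ i ∈ Finset.range (M.sort (· ≥ ·)).length, (i : ℚ) * ((M.sort (· ≥ ·)).getD i 0)

/-!
For weakly decreasing entries, `∑ (i-1) κ_i` is the sum of the minima over unordered pairs, so twice
`n_m` is, up to a linear term, the sum over ordered pairs of components of the minima of their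
β-numbers. Delete the columns of all components simultaneously, one at a time. For components `p`
and `q`, deleting column `c` lowers the β-numbers of the first `p'_c`, respectively `q'_c`, rows by
one. A pair of rows that both move contributes `1`, in total `p'_c q'_c`. Against a row `i` of `p`
that moves, the rows of `q` that do not move carry consecutive β-numbers, so the drops of the
minima telescope to `-min (h_{i,c} + x_p - x_q) 0`; the other end of the telescope vanishes because
the difference of the charges `x_p - x_q` is within one of the difference of the numbers of rows.
As `∑_s (λ^s)'_c = λ̄'_c`, the products add up to `∑_c (λ̄'_c) ^ 2`, which is `2 n(λ̄)` plus the
linear term.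
-/

open Finset

namespace Ptn

theorem lt_conj_iff (p : Ptn) (i k : ℕ) : i < p.conj k ↔ k < p.parts i := by
  have hex : ∃ c, p.parts c ≤ k := by
    obtain ⟨N, hN⟩ := p.eventually_zero
    exact ⟨N, by simp [hN N le_rfl]⟩
  have hmem : ∀ i, k < p.parts i ↔ i < Nat.find hex := fun i => by
    rw [Nat.lt_find_iff]
    exact ⟨fun h j hj => not_le.mpr (h.trans_le (p.antitone' hj)), fun h => not_le.mp (h i le_rfl)⟩
  have hconj : p.conj k = Nat.find hex := by
    rw [conj, Nat.card_congr (Equiv.subtypeEquivRight hmem)]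
    exact (Nat.card_eq_card_toFinset (Set.Iio _)).trans (by simp)
  rw [hconj, hmem]

theorem conj_le_iff (p : Ptn) (i k : ℕ) : p.conj k ≤ i ↔ p.parts i ≤ k := by
  rw [← not_lt, lt_conj_iff, not_lt]

theorem conj_le_of_parts_eq_zero {p : Ptn} {A : ℕ} (hA : p.parts A = 0) (k : ℕ) :
    p.conj k ≤ A :=
  (p.conj_le_iff A k).2 (hA ▸ k.zero_le)

section SumOverNodes

variable {M : Type*} [AddCommMonoid M] (p : Ptn) {A K : ℕ}

theorem finsum_rows_eq_sum_range (hA : p.parts A = 0) (f : ℕ → ℕ → M) :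
    ∑ᶠ i, ∑ j ∈ range (p.parts i), f i j = ∑ i ∈ range A, ∑ j ∈ range (p.parts i), f i j := by
  refine finsum_eq_sum_of_support_subset _ fun i hi => mem_coe.2 (mem_range.2 ?_)
  by_contra! hAi
  have hzero : p.parts i = 0 := Nat.le_zero.1 (hA ▸ p.antitone' hAi)
  simp [hzero] at hi

theorem finsum_rows_eq_sum_cols (hK : p.parts 0 ≤ K) (f : ℕ → ℕ → M) :
    ∑ᶠ i, ∑ j ∈ range (p.parts i), f i j = ∑ j ∈ range K, ∑ i ∈ range (p.conj j), f i j := by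
  obtain ⟨A, hA⟩ := p.eventually_zero
  have hA : p.parts A = 0 := hA A le_rfl
  rw [p.finsum_rows_eq_sum_range hA]
  refine Finset.sum_comm' fun i j => ?_
  simp only [mem_range, p.lt_conj_iff]
  refine ⟨fun h => ⟨h.2, h.2.trans_le ((p.antitone' i.zero_le).trans hK)⟩, fun h => ⟨?_, h.1⟩⟩
  exact ((p.lt_conj_iff i j).2 h.1).trans_le (conj_le_of_parts_eq_zero hA j)

theorem sum_parts_eq_sum_conj (hA : p.parts A = 0) (hK : p.parts 0 ≤ K) :
    ∑ i ∈ range A, p.parts i = ∑ c ∈ range K, p.conj c := by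
  have h := (p.finsum_rows_eq_sum_range hA fun _ _ => 1).symm.trans
    (p.finsum_rows_eq_sum_cols hK fun _ _ => 1)
  simpa only [sum_const, card_range, smul_eq_mul, mul_one] using h

theorem two_mul_nn_add_sum_conj (hK : p.parts 0 ≤ K) :
    2 * p.nn + ∑ c ∈ range K, p.conj c = ∑ c ∈ range K, p.conj c ^ 2 := by
  have hnn : p.nn = ∑ c ∈ range K, ∑ i ∈ range (p.conj c), i := by
    simpa [nn, mul_comm] using p.finsum_rows_eq_sum_cols hK fun i _ => i
  rw [hnn, mul_sum, ← sum_add_distrib]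
  refine sum_congr rfl fun c _ => ?_
  rw [mul_comm, sum_range_id_mul_two]
  cases p.conj c <;> grind

end SumOverNodes

/-- The (integral) β-number of row `i`, namely its length minus `i + 1`, of the partition obtained
from `p` by deleting its first `c` columns; the truncated subtraction empties the rows of length at
most `c`. -/
def truncBeta (p : Ptn) (c i : ℕ) : ℤ := ((p.parts i - c : ℕ) : ℤ) - (i + 1)

theorem truncBeta_succ_of_lt_conj {p : Ptn} {c i : ℕ} (hi : i < p.conj c) :
    p.truncBeta (c + 1) i = p.truncBeta c i - 1 := by
  have := (p.lt_conj_iff i c).1 hi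
  unfold truncBeta
  omega

theorem truncBeta_of_parts_le {p : Ptn} {c i : ℕ} (hi : p.parts i ≤ c) :
    p.truncBeta c i = -(i + 1) := by
  simp [truncBeta, Nat.sub_eq_zero_of_le hi]

theorem neg_le_truncBeta_of_lt_conj {p : Ptn} {c i : ℕ} (hi : i < p.conj c) :
    -i ≤ p.truncBeta c i := by
  have := (p.lt_conj_iff i c).1 hi
  unfold truncBeta
  omega

theorem ghook_eq_truncBeta_add_conj {p : Ptn} (q : Ptn) {i c : ℕ} (hi : i < p.conj c) :
    ghook p q i c = p.truncBeta c i + q.conj c := by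
  have := (p.lt_conj_iff i c).1 hi
  unfold ghook truncBeta
  omega

theorem one_le_ghook_self {p : Ptn} {i j : ℕ} (hi : i < p.conj j) : 1 ≤ ghook p p i j := by
  have := neg_le_truncBeta_of_lt_conj hi
  rw [ghook_eq_truncBeta_add_conj p hi]
  omega

section LinearOrder

variable {R : Type*} [Ring R] [LinearOrder R]

theorem min_truncBeta_sub_succ_eq_zero {p q : Ptn} {c i k : ℕ} (hi : p.conj c ≤ i)
    (hk : q.conj c ≤ k) (x y : R) :
    min (p.truncBeta c i + x) (q.truncBeta c k + y)
      - min (p.truncBeta (c + 1) i + x) (q.truncBeta (c + 1) k + y) = 0 := by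
  have hi : p.parts i ≤ c := (p.conj_le_iff i c).1 hi
  have hk : q.parts k ≤ c := (q.conj_le_iff k c).1 hk
  rw [truncBeta_of_parts_le hi, truncBeta_of_parts_le hk,
    truncBeta_of_parts_le (hi.trans c.le_succ), truncBeta_of_parts_le (hk.trans c.le_succ),
    sub_self]

/-- The total `∑ min (h_{i,j}^{p,q} + z) 0` over the nodes of `p`: the contribution of an ordered
pair of components, with difference of charges `z`, to the correction term of the formula. -/
noncomputable def hookDefect (p q : Ptn) (z : R) : R :=
  ∑ᶠ i, ∑ j ∈ range (p.parts i), min ((ghook p q i j : R) + z) 0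

theorem hookDefect_eq_sum_cols (p q : Ptn) {K : ℕ} (hK : p.parts 0 ≤ K) (z : R) :
    hookDefect p q z = ∑ c ∈ range K, ∑ i ∈ range (p.conj c), min ((ghook p q i c : R) + z) 0 :=
  p.finsum_rows_eq_sum_cols hK _

theorem finsum_sum_min_ghook {ι : Type*} (p : Ptn) (Λ : ι → Ptn) (T : Finset ι) (z : ι → R) :
    ∑ᶠ i, ∑ j ∈ range (p.parts i), ∑ t ∈ T, min ((ghook p (Λ t) i j : R) + z t) 0
      = ∑ t ∈ T, hookDefect p (Λ t) (z t) := by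
  simp only [p.finsum_rows_eq_sum_cols le_rfl, hookDefect_eq_sum_cols p _ le_rfl]
  rw [sum_comm]
  exact sum_congr rfl fun c _ => sum_comm

end LinearOrder

end Ptn

section MinBeta

variable {R : Type*} [CommRing R] [LinearOrder R] [IsStrictOrderedRing R]

theorem sum_Ico_min_sub_min_sub_one {a b : ℕ} (hab : a ≤ b) {u y : R} (hu : 0 ≤ u - y + b) :
    ∑ k ∈ Ico a b, (min u (-(k + 1) + y) - min (u - 1) (-(k + 1) + y)) = -min (u - y + a) 0 := by
  have hterm (k : ℕ) : min u (-(k + 1) + y) - min (u - 1) (-(k + 1) + y)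
      = min (u - y + (k + 1 : ℕ)) 0 - min (u - y + k) 0 := by
    push_cast
    grind
  simp only [hterm]
  rw [sum_Ico_sub (fun k : ℕ => min (u - y + k) 0) hab, min_eq_right hu, zero_sub]

namespace Ptn

theorem hookDefect_self_zero (p : Ptn) : hookDefect p p (0 : R) = 0 := by
  rw [hookDefect_eq_sum_cols p p le_rfl]
  refine sum_eq_zero fun c _ => sum_eq_zero fun i hi => min_eq_right ?_
  rw [add_zero]
  exact Int.cast_nonneg (zero_le_one.trans (one_le_ghook_self (mem_range.1 hi)))

theorem min_truncBeta_sub_succ_eq_one {p q : Ptn} {c i k : ℕ} (hi : i < p.conj c)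
    (hk : k < q.conj c) (x y : R) :
    min (p.truncBeta c i + x) (q.truncBeta c k + y)
      - min (p.truncBeta (c + 1) i + x) (q.truncBeta (c + 1) k + y) = 1 := by
  rw [truncBeta_succ_of_lt_conj hi, truncBeta_succ_of_lt_conj hk]
  push_cast
  rw [sub_add_eq_add_sub, sub_add_eq_add_sub, min_sub_sub_right, sub_sub_cancel]

theorem sum_Ico_min_truncBeta_sub_succ {p q : Ptn} {B c i : ℕ} (hB : q.parts B = 0)
    (hi : i < p.conj c) {x y : R} (hiB : i ≤ B + (x - y)) :
    ∑ k ∈ Ico (q.conj c) B,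
        (min (p.truncBeta c i + x) (q.truncBeta c k + y)
          - min (p.truncBeta (c + 1) i + x) (q.truncBeta (c + 1) k + y))
      = -min ((ghook p q i c : R) + (x - y)) 0 := by
  have hu : 0 ≤ (p.truncBeta c i + x : R) - y + B := by
    have : ((-i : ℤ) : R) ≤ p.truncBeta c i := Int.cast_le.2 (neg_le_truncBeta_of_lt_conj hi)
    push_cast at this
    linarith
  have hterm : ∀ k ∈ Ico (q.conj c) B,
      min (p.truncBeta c i + x) (q.truncBeta c k + y)
          - min (p.truncBeta (c + 1) i + x) (q.truncBeta (c + 1) k + y)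
        = min (p.truncBeta c i + x) (-(k + 1 : R) + y)
          - min ((p.truncBeta c i + x) - 1) (-(k + 1 : R) + y) := fun k hk => by
    have hk : q.parts k ≤ c := (q.conj_le_iff k c).1 (mem_Ico.1 hk).1
    rw [truncBeta_succ_of_lt_conj hi, truncBeta_of_parts_le hk,
      truncBeta_of_parts_le (hk.trans c.le_succ)]
    push_cast
    rw [sub_add_eq_add_sub]
  rw [sum_congr rfl hterm, sum_Ico_min_sub_min_sub_one (conj_le_of_parts_eq_zero hB c) hu,
    ghook_eq_truncBeta_add_conj q hi]
  push_cast
  congr 2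
  ring

section Pair

variable {p q : Ptn} {A B : ℕ} {x y : R}

theorem sum_min_truncBeta_sub_succ (hA : p.parts A = 0) (hB : q.parts B = 0)
    (hxy : |(x - A) - (y - B)| ≤ 1) (c : ℕ) :
    ∑ i ∈ range A, ∑ k ∈ range B,
        (min (p.truncBeta c i + x) (q.truncBeta c k + y)
          - min (p.truncBeta (c + 1) i + x) (q.truncBeta (c + 1) k + y))
      = p.conj c * q.conj c
        - ∑ i ∈ range (p.conj c), min ((ghook p q i c : R) + (x - y)) 0
        - ∑ k ∈ range (q.conj c), min ((ghook q p k c : R) + (y - x)) 0 := by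
  have hPA := conj_le_of_parts_eq_zero hA c
  have hQB := conj_le_of_parts_eq_zero hB c
  obtain ⟨hxy₁, hxy₂⟩ := abs_le.1 hxy
  set d : ℕ → ℕ → R := fun i k => min (p.truncBeta c i + x) (q.truncBeta c k + y)
    - min (p.truncBeta (c + 1) i + x) (q.truncBeta (c + 1) k + y) with hd
  have hboth : ∑ i ∈ range (p.conj c), ∑ k ∈ range (q.conj c), d i k = p.conj c * q.conj c := by
    rw [sum_congr rfl fun i hi => sum_congr rfl fun k hk =>
      min_truncBeta_sub_succ_eq_one (mem_range.1 hi) (mem_range.1 hk) x y]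
    simp
  have hleft : ∑ i ∈ range (p.conj c), ∑ k ∈ Ico (q.conj c) B, d i k
      = -∑ i ∈ range (p.conj c), min ((ghook p q i c : R) + (x - y)) 0 := by
    rw [← sum_neg_distrib]
    refine sum_congr rfl fun i hi => sum_Ico_min_truncBeta_sub_succ hB (mem_range.1 hi) ?_
    have : (i : R) + 1 ≤ A := by exact_mod_cast (mem_range.1 hi).trans_le hPA
    linarith
  have hright : ∑ i ∈ Ico (p.conj c) A, ∑ k ∈ range (q.conj c), d i k
      = -∑ k ∈ range (q.conj c), min ((ghook q p k c : R) + (y - x)) 0 := by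
    rw [sum_comm, ← sum_neg_distrib]
    refine sum_congr rfl fun k hk => ?_
    simp only [hd, min_comm ((p.truncBeta _ _ : R) + x)]
    refine sum_Ico_min_truncBeta_sub_succ hA (mem_range.1 hk) ?_
    have : (k : R) + 1 ≤ B := by exact_mod_cast (mem_range.1 hk).trans_le hQB
    linarith
  have hneither : ∑ i ∈ Ico (p.conj c) A, ∑ k ∈ Ico (q.conj c) B, d i k = 0 :=
    sum_eq_zero fun i hi => sum_eq_zero fun k hk =>
      min_truncBeta_sub_succ_eq_zero (mem_Ico.1 hi).1 (mem_Ico.1 hk).1 x y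
  rw [← sum_range_add_sum_Ico _ hPA]
  simp only [← sum_range_add_sum_Ico _ hQB, sum_add_distrib]
  rw [hboth, hleft, hright, hneither]
  ring

theorem sum_min_beta_sub_sum_min_empty (hA : p.parts A = 0) (hB : q.parts B = 0)
    (hxy : |(x - A) - (y - B)| ≤ 1) {K : ℕ} (hpK : p.parts 0 ≤ K) (hqK : q.parts 0 ≤ K) :
    ∑ i ∈ range A, ∑ k ∈ range B,
        (min (p.truncBeta 0 i + x) (q.truncBeta 0 k + y)
          - min (empty.truncBeta 0 i + x) (empty.truncBeta 0 k + y))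
      = ∑ c ∈ range K, (p.conj c : R) * q.conj c
        - hookDefect p q (x - y) - hookDefect q p (y - x) := by
  have hempty {r : Ptn} (hr : r.parts 0 ≤ K) (i : ℕ) :
      empty.truncBeta 0 i = r.truncBeta K i := by
    rw [truncBeta_of_parts_le ((r.antitone' i.zero_le).trans hr)]
    exact truncBeta_of_parts_le le_rfl
  rw [hookDefect_eq_sum_cols p q hpK, hookDefect_eq_sum_cols q p hqK, ← sum_sub_distrib,
    ← sum_sub_distrib]
  simp only [← sum_min_truncBeta_sub_succ hA hB hxy]
  symm
  rw [sum_comm]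
  refine sum_congr rfl fun i _ => ?_
  rw [sum_comm]
  refine sum_congr rfl fun k _ => ?_
  rw [hempty hpK, hempty hqK]
  exact sum_range_sub' (fun c => min (p.truncBeta c i + x : R) (q.truncBeta c k + y)) K

end Pair

end Ptn

end MinBeta

theorem two_mul_sum_mul_getD_of_pairwise_ge {R : Type*} [CommRing R] [LinearOrder R] {L : List R}
    (hL : L.Pairwise (· ≥ ·)) :
    2 * ∑ i ∈ range L.length, (i : R) * L.getD i 0
      = (L.map fun x => (L.map fun y => min x y).sum).sum - L.sum := by
  induction L with
  | nil => simp
  | cons x L ih =>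
    obtain ⟨hx, hL⟩ := List.pairwise_cons.1 hL
    have hsum : ∑ i ∈ range L.length, L.getD i 0 = L.sum := by
      rw [← Fin.sum_univ_eq_sum_range (fun i => L.getD i 0)]
      simp
    have hmin_right : (L.map fun y => min x y) = L :=
      (List.map_congr_left fun y hy => min_eq_right (hx y hy)).trans L.map_id'
    have hmin_left : (L.map fun y => min y x) = L := by
      simpa only [min_comm] using hmin_right
    simp only [List.length_cons, sum_range_succ', List.map_cons, List.sum_cons,
      List.sum_map_add, hmin_right, hmin_left, List.getD_cons_succ, Nat.cast_add, Nat.cast_one,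
      add_mul, one_mul, sum_add_distrib, hsum, min_self, Nat.cast_zero, zero_mul]
    linear_combination ih hL

theorem two_mul_nmOf (M : Multiset ℚ) :
    2 * nmOf M = (M.map fun x => (M.map fun y => min x y).sum).sum - M.sum := by
  rw [nmOf, two_mul_sum_mul_getD_of_pairwise_ge (M.pairwise_sort _)]
  conv_rhs => rw [← M.sort_eq (· ≥ ·)]
  simp only [Multiset.map_coe, Multiset.sum_coe]

theorem abs_sub_sub_sub_le_one_of_eq_add_floor {R : Type*} [CommRing R] [LinearOrder R]
    [IsStrictOrderedRing R] [FloorRing R] {N A B : ℕ} {a b : R} (hA : (A : ℤ) = N + ⌊a⌋)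
    (hB : (B : ℤ) = N + ⌊b⌋) : |(N + a - A) - (N + b - B)| ≤ 1 := by
  have hcast {C : ℕ} {c : R} (hC : (C : ℤ) = N + ⌊c⌋) : N + c - C = Int.fract c := by
    have : (C : R) = N + ⌊c⌋ := mod_cast congrArg (Int.cast : ℤ → R) hC
    rw [this, add_sub_add_left_eq_sub, Int.self_sub_floor]
  rw [hcast hA, hcast hB]
  exact abs_sub_le_of_nonneg_of_le (Int.fract_nonneg a) (Int.fract_lt_one a).le
    (Int.fract_nonneg b) (Int.fract_lt_one b).le

section Family

variable {ι : Type*} [Fintype ι]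

theorem sum_map_sum_map_range {M N : Type*} [AddCommMonoid N] (A : ι → ℕ) (g : ι → ℕ → M)
    (f : M → N) :
    ((∑ j, (Multiset.range (A j)).map (g j)).map f).sum = ∑ j, ∑ i ∈ range (A j), f (g j i) := by
  rw [← Multiset.coe_mapAddMonoidHom, map_sum, Multiset.sum_sum]
  simp only [Multiset.coe_mapAddMonoidHom, Multiset.map_map]
  rfl

theorem two_mul_nmOf_sum_map_range (A : ι → ℕ) (g : ι → ℕ → ℚ) :
    2 * nmOf (∑ j, (Multiset.range (A j)).map (g j))
      = ∑ s, ∑ t, ∑ i ∈ range (A s), ∑ k ∈ range (A t), min (g s i) (g t k)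
        - ∑ s, ∑ i ∈ range (A s), g s i := by
  have hsum := sum_map_sum_map_range A g id
  rw [Multiset.map_id] at hsum
  simp only [two_mul_nmOf, sum_map_sum_map_range, hsum, id]
  congr 1
  exact sum_congr rfl fun s _ => sum_comm

/-- The multiset of all `B^j_i = λ^j_i - i + x_j`, `1 ≤ i ≤ A_j`, with charge `x_j` in place of
`N + m_j`. -/
def chargedBeta (A : ι → ℕ) (x : ι → ℚ) (Λ : ι → Ptn) : Multiset ℚ :=
  ∑ j, (Multiset.range (A j)).map fun i => ((Λ j).parts i : ℚ) - (i + 1) + x j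

theorem two_mul_nmOf_chargedBeta (A : ι → ℕ) (x : ι → ℚ) (Λ : ι → Ptn) :
    2 * nmOf (chargedBeta A x Λ)
      = ∑ s, ∑ t, ∑ i ∈ range (A s), ∑ k ∈ range (A t),
          min (((Λ s).truncBeta 0 i : ℚ) + x s) ((Λ t).truncBeta 0 k + x t)
        - ∑ s, ∑ i ∈ range (A s), (((Λ s).truncBeta 0 i : ℚ) + x s) := by
  rw [chargedBeta, two_mul_nmOf_sum_map_range]
  simp [Ptn.truncBeta]

variable {A : ι → ℕ} {Λ : ι → Ptn} {b : Ptn} {K : ℕ}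

theorem sum_sum_beta_sub_empty (hlen : ∀ j, (Λ j).parts (A j) = 0)
    (hK : ∀ j, (Λ j).parts 0 ≤ K) (hb : ∀ k, b.conj k = ∑ s, (Λ s).conj k) (x : ι → ℚ) :
    ∑ s, ∑ i ∈ range (A s), (((Λ s).truncBeta 0 i : ℚ) + x s)
        - ∑ s, ∑ i ∈ range (A s), ((Ptn.empty.truncBeta 0 i : ℚ) + x s)
      = ∑ c ∈ range K, (b.conj c : ℚ) := by
  simp only [hb, Nat.cast_sum]
  rw [sum_comm, ← sum_sub_distrib]
  refine sum_congr rfl fun s _ => ?_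
  rw [← Nat.cast_sum, ← (Λ s).sum_parts_eq_sum_conj (hlen s) (hK s), ← sum_sub_distrib,
    Nat.cast_sum]
  refine sum_congr rfl fun i _ => ?_
  simp only [Ptn.truncBeta, Ptn.empty, Nat.sub_zero]
  push_cast
  ring

theorem sum_sum_min_beta_sub_empty (hlen : ∀ j, (Λ j).parts (A j) = 0)
    (hK : ∀ j, (Λ j).parts 0 ≤ K) (hb : ∀ k, b.conj k = ∑ s, (Λ s).conj k) {x : ι → ℚ}
    (hx : ∀ s t, |(x s - A s) - (x t - A t)| ≤ 1) :
    ∑ s, ∑ t, ∑ i ∈ range (A s), ∑ k ∈ range (A t),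
          min (((Λ s).truncBeta 0 i : ℚ) + x s) ((Λ t).truncBeta 0 k + x t)
        - ∑ s, ∑ t, ∑ i ∈ range (A s), ∑ k ∈ range (A t),
          min ((Ptn.empty.truncBeta 0 i : ℚ) + x s) (Ptn.empty.truncBeta 0 k + x t)
      = ∑ c ∈ range K, (b.conj c : ℚ) ^ 2
        - 2 * ∑ s, ∑ t, Ptn.hookDefect (Λ s) (Λ t) (x s - x t) := by
  have hsq : ∑ c ∈ range K, (b.conj c : ℚ) ^ 2
      = ∑ s, ∑ t, ∑ c ∈ range K, ((Λ s).conj c : ℚ) * (Λ t).conj c := by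
    simp only [hb, Nat.cast_sum, sq, sum_mul_sum]
    rw [sum_comm]
    exact sum_congr rfl fun s _ => sum_comm
  have hswap : ∑ s, ∑ t, Ptn.hookDefect (Λ t) (Λ s) (x t - x s)
      = ∑ s, ∑ t, Ptn.hookDefect (Λ s) (Λ t) (x s - x t) := sum_comm
  rw [hsq, two_mul]
  nth_rw 2 [← hswap]
  simp only [← sum_sub_distrib, ← sub_sub,
    Ptn.sum_min_beta_sub_sum_min_empty (hlen _) (hlen _) (hx _ _) (hK _) (hK _)]

theorem stmt11_general [DecidableEq ι] (A : ι → ℕ) (x : ι → ℚ)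
    (hx : ∀ s t, |(x s - A s) - (x t - A t)| ≤ 1) (Λ : ι → Ptn)
    (hlen : ∀ j, (Λ j).parts (A j) = 0) (b : Ptn) (hb : ∀ k, b.conj k = ∑ s, (Λ s).conj k) :
    nmOf (chargedBeta A x Λ) - nmOf (chargedBeta A x fun _ => Ptn.empty)
      = b.nn - ∑ s, ∑ᶠ i, ∑ j ∈ range ((Λ s).parts i), ∑ t ∈ univ.erase s,
          min ((ghook (Λ s) (Λ t) i j : ℚ) + (x s - x t)) 0 := by
  have hcorrection (s : ι) : ∑ᶠ i, ∑ j ∈ range ((Λ s).parts i), ∑ t ∈ univ.erase s,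
      min ((ghook (Λ s) (Λ t) i j : ℚ) + (x s - x t)) 0
        = ∑ t, Ptn.hookDefect (Λ s) (Λ t) (x s - x t) := by
    rw [Ptn.finsum_sum_min_ghook, sum_erase]
    rw [sub_self, Ptn.hookDefect_self_zero]
  obtain ⟨K, hK⟩ : ∃ K, ∀ s, (Λ s).parts 0 ≤ K :=
    ⟨_, fun s => single_le_sum (fun t _ => Nat.zero_le ((Λ t).parts 0)) (mem_univ s)⟩
  have hbK : b.parts 0 ≤ K := by
    rw [← Ptn.conj_le_iff, hb]
    exact (sum_eq_zero fun s _ => Nat.le_zero.1 (((Λ s).conj_le_iff 0 K).2 (hK s))).le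
  have hnn : 2 * (b.nn : ℚ) + ∑ c ∈ range K, (b.conj c : ℚ) = ∑ c ∈ range K, (b.conj c : ℚ) ^ 2 :=
    mod_cast b.two_mul_nn_add_sum_conj hbK
  simp only [hcorrection]
  linarith [two_mul_nmOf_chargedBeta A x Λ, two_mul_nmOf_chargedBeta A x fun _ => Ptn.empty,
    sum_sum_beta_sub_empty hlen hK hb x, sum_sum_min_beta_sub_empty hlen hK hb hx]

end Family

/-- With `B^j_i = λ^j_i - i + N + m_j` for `i = 1, …, N + ⌊m_j⌋`
(all parts of `λ^j` lying in this range), `κ_m(λ)` the decreasing rearrangement of all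
the `B^j_i`, and `n_m(λ) = Σ_i (i-1) κ_i`, one has
`n_m(λ) - n_m(∅) = n(λ̄) - Σ_s Σ_{(i,j)∈[λ^s]} Σ_{t≠s} min(h^{λ^s,λ^t}_{i,j} + m_s - m_t, 0)`,
where `n_m(∅)` is computed for the empty `l`-partition with the same size `N`, and `λ̄` is
the rearrangement of the parts, characterised by `λ̄'_k = Σ_s λ^{s'}_k`. -/
theorem stmt11 (l n N : ℕ) (hN : 0 < N) (m : Fin l → ℚ)
    (Λ : Fin l → Ptn) (hn : ∑ s, (Λ s).size = n)
    (Nj : Fin l → ℕ) (hNj : ∀ j, (Nj j : ℤ) = (N : ℤ) + ⌊m j⌋)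
    (hlen : ∀ j i, Nj j ≤ i → (Λ j).parts i = 0)
    (b : Ptn) (hb : ∀ k, b.conj k = ∑ s, (Λ s).conj k) :
    nmOf (∑ j : Fin l, (Multiset.range (Nj j)).map
        (fun i => ((Λ j).parts i : ℚ) - ((i : ℚ) + 1) + (N : ℚ) + m j))
      - nmOf (∑ j : Fin l, (Multiset.range (Nj j)).map
        (fun i => (0 : ℚ) - ((i : ℚ) + 1) + (N : ℚ) + m j))
    = (b.nn : ℚ) - ∑ s, ∑ᶠ i, ∑ j ∈ Finset.range ((Λ s).parts i),
        ∑ t ∈ Finset.univ.erase s,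
          min (((ghook (Λ s) (Λ t) i j : ℤ) : ℚ) + m s - m t) 0 := by
  -- In `n_m(∅)` the summation index is elaborated as a rational, so that `Multiset.range (Nj j)` is
  -- coerced through `bind` and `pure`.
  simpa only [Multiset.bind_def, Multiset.pure_def, Multiset.bind_singleton, Multiset.map_map,
    Function.comp_def, chargedBeta, Ptn.empty, Nat.cast_zero, add_sub_add_left_eq_sub, ← add_assoc,
    ← add_sub_assoc]
    using stmt11_general Nj (fun j => N + m j)
      (fun s t => abs_sub_sub_sub_le_one_of_eq_add_floor (hNj s) (hNj t)) Λ
      (fun j => hlen j _ le_rfl) b hb
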